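/- arXiv:1112.4511 — 2 statements merged into one kernel-verified Lean document; each statement's English description precedes it below -/
import Mathlib

section
/- Let ρ0, ρ1, ρ2, ρ3 be nonzero complex numbers such that ρ0, ρ1, −ρ2, −ρ3 all lie in the semiclosed upper half plane, Im(ρ_d/ρ_{d+1}) > 0 for d = 0, 1, 2, and no two of ρ0, ρ1, ρ2, ρ3 are collinear (i.e. ρ_i/ρ_j is not real for all i ≠ j). Then exactly one of the following five strict chains of arguments holds: (DT) Arg(−ρ2) > Arg(−ρ3) > Arg ρ0 > Arg ρ1; (PT) Arg(−ρ2) > Arg ρ0 > Arg(−ρ3) > Arg ρ1; (σ3) Arg(−ρ2) > Arg ρ0 > Arg ρ1 > Arg(−ρ3); (σ4) Arg ρ0 > Arg(−ρ2) > Arg(−ρ3) > Arg ρ1; (σ5) Arg ρ0 > Arg(−ρ2) > Arg ρ1 > Arg(−ρ3). -/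
/-!
For nonzero `z`, `w` one has `Im (z / w) = ‖z‖ / ‖w‖ * sin (arg z - arg w)`. When both arguments lie
in `(0, π]`, their difference lies in `(-π, π)`, so the sign of `Im (z / w)` decides the order of the
two arguments. Writing `a, b, c, d` for the arguments of `ρ0, ρ1, -ρ2, -ρ3`, the hypotheses become
`b < a`, `b < c`, `d < c`, while non-collinearity makes `a ≠ c`, `a ≠ d`, `b ≠ d`. The linear orders
compatible with these three inequalities are exactly the five chains, which exclude each other.
-/

open Complex Real

lemma im_div_eq_norm_mul_sin (z w : ℂ) :
    (z / w).im = ‖z‖ / ‖w‖ * Real.sin (arg z - arg w) := by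
  have h : z / w = ((‖z‖ / ‖w‖ : ℝ) : ℂ) * Complex.exp ((arg z - arg w : ℝ) * I) := by
    conv_lhs => rw [← norm_mul_exp_arg_mul_I z, ← norm_mul_exp_arg_mul_I w]
    push_cast
    rw [sub_mul, Complex.exp_sub, mul_div_mul_comm]
  rw [h, im_ofReal_mul, exp_ofReal_mul_I_im]

lemma arg_lt_arg_of_im_div_pos {z w : ℂ} (hz : 0 < arg z) (hw : arg w ≤ π)
    (h : 0 < (z / w).im) : arg w < arg z := by
  by_contra! hle
  rw [im_div_eq_norm_mul_sin] at h
  have hs : Real.sin (arg z - arg w) ≤ 0 :=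
    Real.sin_nonpos_of_nonpos_of_neg_pi_le (by linarith) (by linarith)
  exact absurd h (not_lt.mpr (mul_nonpos_of_nonneg_of_nonpos (by positivity) hs))

lemma arg_ne_arg_of_im_div_ne_zero {z w : ℂ} (h : (z / w).im ≠ 0) : arg z ≠ arg w := by
  intro he
  rw [im_div_eq_norm_mul_sin, he] at h
  simp at h

/-- For a standard configuration of stability vectors satisfying condition V1
(no two of the ρ_i are collinear), exactly one of the five chains of phases
DT, PT, σ3, σ4, σ5 holds. -/
theorem stmt_4 (ρ0 ρ1 ρ2 ρ3 : ℂ)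
    (hn0 : ρ0 ≠ 0) (hn1 : ρ1 ≠ 0) (hn2 : ρ2 ≠ 0) (hn3 : ρ3 ≠ 0)
    (hu0 : 0 < arg ρ0 ∧ arg ρ0 ≤ π)
    (hu1 : 0 < arg ρ1 ∧ arg ρ1 ≤ π)
    (hu2 : 0 < arg (-ρ2) ∧ arg (-ρ2) ≤ π)
    (hu3 : 0 < arg (-ρ3) ∧ arg (-ρ3) ≤ π)
    (hq0 : 0 < (ρ0 / ρ1).im) (hq1 : 0 < (ρ1 / ρ2).im) (hq2 : 0 < (ρ2 / ρ3).im)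
    (hV1 : ∀ i j : Fin 4, i ≠ j →
      (![ρ0, ρ1, ρ2, ρ3] i / ![ρ0, ρ1, ρ2, ρ3] j).im ≠ 0) :
    ∃! k : Fin 5,
      ![ arg (-ρ2) > arg (-ρ3) ∧ arg (-ρ3) > arg ρ0 ∧ arg ρ0 > arg ρ1,
         arg (-ρ2) > arg ρ0 ∧ arg ρ0 > arg (-ρ3) ∧ arg (-ρ3) > arg ρ1,
         arg (-ρ2) > arg ρ0 ∧ arg ρ0 > arg ρ1 ∧ arg ρ1 > arg (-ρ3),
         arg ρ0 > arg (-ρ2) ∧ arg (-ρ2) > arg (-ρ3) ∧ arg (-ρ3) > arg ρ1,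
         arg ρ0 > arg (-ρ2) ∧ arg (-ρ2) > arg ρ1 ∧ arg ρ1 > arg (-ρ3) ] k := by
  have hba : arg ρ1 < arg ρ0 := arg_lt_arg_of_im_div_pos hu0.1 hu1.2 hq0
  have hbc : arg ρ1 < arg (-ρ2) := by
    -- Inverting `ρ1 / ρ2` and negating `ρ2` each flip the sign of the imaginary part.
    refine arg_lt_arg_of_im_div_pos hu2.1 hu1.2 ?_
    have hinv : -ρ2 / ρ1 = -(ρ1 / ρ2)⁻¹ := by rw [inv_div, neg_div]
    have hne : ρ1 / ρ2 ≠ 0 := div_ne_zero hn1 hn2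
    rw [hinv, neg_im, inv_im, neg_div, neg_neg]
    exact div_pos hq1 (normSq_pos.mpr hne)
  have hdc : arg (-ρ3) < arg (-ρ2) :=
    arg_lt_arg_of_im_div_pos hu2.1 hu3.2 (by rwa [neg_div_neg_eq])
  have hac : arg ρ0 ≠ arg (-ρ2) := arg_ne_arg_of_im_div_ne_zero (by
    rw [div_neg, neg_im]
    exact neg_ne_zero.mpr (hV1 0 2 (by decide)))
  have had : arg ρ0 ≠ arg (-ρ3) := arg_ne_arg_of_im_div_ne_zero (by
    rw [div_neg, neg_im]
    exact neg_ne_zero.mpr (hV1 0 3 (by decide)))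
  have hbd : arg ρ1 ≠ arg (-ρ3) := arg_ne_arg_of_im_div_ne_zero (by
    rw [div_neg, neg_im]
    exact neg_ne_zero.mpr (hV1 1 3 (by decide)))
  clear hV1 hq0 hq1 hq2 hu0 hu1 hu2 hu3
  generalize arg ρ0 = a at *
  generalize arg ρ1 = b at *
  generalize arg (-ρ2) = c at *
  generalize arg (-ρ3) = d at *
  -- Each chain is equivalent to `k` being the index singled out by the order of the pairs
  -- `(a, c)`, `(a, d)`, `(b, d)`; this gives existence and uniqueness together.
  have hex : ∀ k : Fin 5, (![c > d ∧ d > a ∧ a > b, c > a ∧ a > d ∧ d > b, c > a ∧ a > b ∧ b > d,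
      a > c ∧ c > d ∧ d > b, a > c ∧ c > b ∧ b > d] k ↔
      k = if a < c then (if a < d then 0 else if b < d then 1 else 2)
        else if b < d then 3 else 4) := by
    intro k
    rcases hac.lt_or_gt with h1 | h1 <;> rcases had.lt_or_gt with h2 | h2 <;>
      rcases hbd.lt_or_gt with h3 | h3 <;> fin_cases k <;>
      simp [*, h1.not_gt, h2.not_gt, h3.not_gt] <;> linarith
  exact ⟨_, (hex _).mpr rfl, fun k hk => (hex k).mp hk⟩
end

section
/- Let ρ0, ρ1, ρ2, ρ3 be nonzero complex numbers such that ρ0, ρ1, −ρ2, −ρ3 all lie in the semiclosed upper half plane, Im(ρ_d/ρ_{d+1}) > 0 for d = 0, 1, 2, and no two of ρ0, ρ1, ρ2, ρ3 are collinear (i.e. ρ_i/ρ_j is not real for all i ≠ j). Then exactly one of the following three mutually exclusive conditions holds: (DT) Arg(−ρ2) > Arg(−ρ3) > Arg ρ0 > Arg ρ1; (V2) Arg ρ0 > Arg(−ρ3), Arg(−ρ2) > Arg(−ρ3), and Arg(−ρ3) > Arg ρ1; (V3) Arg ρ0 > Arg(−ρ3), Arg ρ1 > Arg(−ρ3), and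 Arg(−ρ2) > Arg(−ρ3). -/
open Complex Real

/-- For a standard configuration of stability vectors satisfying condition V1,
exactly one of the three mutually exclusive conditions DT, V2, V3 holds. -/
theorem stmt_8 (ρ0 ρ1 ρ2 ρ3 : ℂ)
    (hn0 : ρ0 ≠ 0) (hn1 : ρ1 ≠ 0) (hn2 : ρ2 ≠ 0) (hn3 : ρ3 ≠ 0)
    (hu0 : 0 < arg ρ0 ∧ arg ρ0 ≤ π)
    (hu1 : 0 < arg ρ1 ∧ arg ρ1 ≤ π)
    (hu2 : 0 < arg (-ρ2) ∧ arg (-ρ2) ≤ π)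
    (hu3 : 0 < arg (-ρ3) ∧ arg (-ρ3) ≤ π)
    (hq0 : 0 < (ρ0 / ρ1).im) (hq1 : 0 < (ρ1 / ρ2).im) (hq2 : 0 < (ρ2 / ρ3).im)
    (hV1 : ∀ i j : Fin 4, i ≠ j →
      (![ρ0, ρ1, ρ2, ρ3] i / ![ρ0, ρ1, ρ2, ρ3] j).im ≠ 0) :
    ∃! k : Fin 3,
      ![ arg (-ρ2) > arg (-ρ3) ∧ arg (-ρ3) > arg ρ0 ∧ arg ρ0 > arg ρ1,
         arg ρ0 > arg (-ρ3) ∧ arg (-ρ2) > arg (-ρ3) ∧ arg (-ρ3) > arg ρ1,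
         arg ρ0 > arg (-ρ3) ∧ arg ρ1 > arg (-ρ3) ∧ arg (-ρ2) > arg (-ρ3) ] k := by
  have h10 : arg ρ1 < arg ρ0 := arg_lt_arg_of_im_div_pos hu0.1 hu1.2 hq0
  have h32 : arg (-ρ3) < arg (-ρ2) :=
    arg_lt_arg_of_im_div_pos hu2.1 hu3.2 (by rwa [neg_div_neg_eq])
  have h03 : arg ρ0 ≠ arg (-ρ3) := arg_ne_arg_of_im_div_ne_zero (by
    have h := hV1 0 3 (by decide)
    simpa [div_neg] using h)
  have h13 : arg ρ1 ≠ arg (-ρ3) := arg_ne_arg_of_im_div_ne_zero (by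
    have h := hV1 1 3 (by decide)
    simpa [div_neg] using h)
  rcases lt_or_gt_of_ne h03 with h | h
  · refine ⟨0, ⟨h32, h, h10⟩, fun k hk => ?_⟩
    fin_cases k
    · rfl
    · exact absurd h (lt_asymm hk.1)
    · exact absurd h (lt_asymm hk.1)
  rcases lt_or_gt_of_ne h13 with h' | h'
  · refine ⟨1, ⟨h, h32, h'⟩, fun k hk => ?_⟩
    fin_cases k
    · exact absurd h (lt_asymm hk.2.1)
    · rfl
    · exact absurd h' (lt_asymm hk.2.1)
  · refine ⟨2, ⟨h, h', h32⟩, fun k hk => ?_⟩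
    fin_cases k
    · exact absurd h (lt_asymm hk.2.1)
    · exact absurd h' (lt_asymm hk.2.2)
    · rfl
end
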